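/- Let Ω ⊆ ℝ^N be a G-invariant open set, where G is a closed subgroup of O(N) satisfying (G2) and σ : G → {1,−1} is a continuous surjective group homomorphism. Then there exists a Palais–Smale sequence at level m(Ω)^σ_G: a sequence (u_n) in Ḣ^s(Ω)^σ_G such that E(u_n;Ω) → m(Ω)^σ_G and sup{ |⟨E'(u_n), φ⟩| : φ ∈ Ḣ^s(Ω)^σ_G, ‖φ‖ ≤ 1 } → 0 as n → ∞. -/

import Mathlib

open MeasureTheory Real

noncomputable section

abbrev Euc (N : ℕ) := EuclideanSpace ℝ (Fin N)

/-- The critical exponent `2*_s = 2N/(N-2s)`. -/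
def twoStar (N : ℕ) (s : ℝ) : ℝ := 2 * N / (N - 2 * s)

/-- Square of the Gagliardo seminorm `‖u‖²`. -/
def gagSq (N : ℕ) (s : ℝ) (u : Euc N → ℝ) : ℝ :=
  ∫ p : Euc N × Euc N, (u p.1 - u p.2) ^ 2 / dist p.1 p.2 ^ ((N : ℝ) + 2 * s)

/-- The Gagliardo seminorm `‖u‖`. -/
def gagNorm (N : ℕ) (s : ℝ) (u : Euc N → ℝ) : ℝ := Real.sqrt (gagSq N s u)

/-- Finiteness of the Gagliardo seminorm (`‖u‖ < ∞`). -/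
def GagFinite (N : ℕ) (s : ℝ) (u : Euc N → ℝ) : Prop :=
  Integrable (fun p : Euc N × Euc N => (u p.1 - u p.2) ^ 2 / dist p.1 p.2 ^ ((N : ℝ) + 2 * s))

/-- Membership in `Ḣ^s(Ω)`: measurable, in `L^{2*_s}(ℝ^N)`, finite Gagliardo seminorm,
and vanishing a.e. outside `Ω`. -/
structure MemHs (N : ℕ) (s : ℝ) (Ω : Set (Euc N)) (u : Euc N → ℝ) : Prop where
  meas : Measurable u
  lp : Integrable fun x : Euc N => |u x| ^ twoStar N s
  fin : GagFinite N s u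
  vanish : ∀ᵐ x : Euc N, x ∉ Ω → u x = 0

/-- The energy functional `E(u;Ω)`. -/
def energy (N : ℕ) (s : ℝ) (Ω : Set (Euc N)) (u : Euc N → ℝ) : ℝ :=
  (1 / 2) * gagSq N s u - (1 / twoStar N s) * ∫ x in Ω, |u x| ^ twoStar N s

/-- The Nehari functional `N(u;Ω)`. -/
def nehariFun (N : ℕ) (s : ℝ) (Ω : Set (Euc N)) (u : Euc N → ℝ) : ℝ :=
  gagSq N s u - ∫ x in Ω, |u x| ^ twoStar N s

/-- The pairing `⟨E'(u), v⟩` (with domain `Ω`). -/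
def pairing (N : ℕ) (s : ℝ) (Ω : Set (Euc N)) (u v : Euc N → ℝ) : ℝ :=
  (∫ p : Euc N × Euc N, (u p.1 - u p.2) * (v p.1 - v p.2) / dist p.1 p.2 ^ ((N : ℝ) + 2 * s))
    - ∫ x in Ω, |u x| ^ (twoStar N s - 2) * u x * v x

/-- The sharp fractional Sobolev constant `S(N,s)`. -/
def sobolevS (N : ℕ) (s : ℝ) : ℝ :=
  (2 : ℝ) ^ (-(2 * s)) * Real.pi ^ (-s) *
    (Real.Gamma ((N - 2 * s) / 2) / Real.Gamma ((N + 2 * s) / 2)) *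
    (Real.Gamma N / Real.Gamma (N / 2)) ^ (2 * s / N)

/-- The orthogonal group `O(N)`. -/
abbrev ONgrp (N : ℕ) := Matrix.orthogonalGroup (Fin N) ℝ

/-- The linear action of `O(N)` on `ℝ^N`. -/
def ogAct {N : ℕ} (g : ONgrp N) (x : Euc N) : Euc N :=
  Matrix.toEuclideanLin (g : Matrix (Fin N) (Fin N) ℝ) x

/-- `σ`-equivariance of `u : ℝ^N → ℝ` under a subgroup `G` of `O(N)`:
`u (g x) = σ(g) u (x)` for all `g ∈ G`, `x ∈ ℝ^N`. -/
def IsEquivariant {N : ℕ} (G : Subgroup (ONgrp N)) (σ : G →* ℤˣ) (u : Euc N → ℝ) : Prop :=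
  ∀ g : G, ∀ x : Euc N, u (ogAct (g : ONgrp N) x) = ((σ g : ℤ) : ℝ) * u x

/-- `G`-invariance of a set. -/
def IsInvariantSet {N : ℕ} (G : Subgroup (ONgrp N)) (Ω : Set (Euc N)) : Prop :=
  ∀ g : G, ∀ x ∈ Ω, ogAct (g : ONgrp N) x ∈ Ω

/-- Condition (G1): every `G`-orbit is infinite or a single point. -/
def CondG1 {N : ℕ} (G : Subgroup (ONgrp N)) : Prop :=
  ∀ x : Euc N, ({y : Euc N | ∃ g : G, ogAct (g : ONgrp N) x = y}).Infinite ∨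
    ∀ g : G, ogAct (g : ONgrp N) x = x

/-- Condition (G2): there is a point `ξ` with `σ = 1` on the stabilizer of `ξ`. -/
def CondG2 {N : ℕ} (G : Subgroup (ONgrp N)) (σ : G →* ℤˣ) : Prop :=
  ∃ ξ : Euc N, ∀ g : G, ogAct (g : ONgrp N) ξ = ξ → σ g = 1

/-- The Nehari level `m(Ω)^σ_G = inf { E(u;Ω) : u ∈ N(Ω)^σ_G }`. -/
def mval (N : ℕ) (s : ℝ) (Ω : Set (Euc N)) (G : Subgroup (ONgrp N)) (σ : G →* ℤˣ) : ℝ :=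
  sInf {c : ℝ | ∃ u : Euc N → ℝ, MemHs N s Ω u ∧ IsEquivariant G σ u ∧
    ¬ (∀ᵐ x : Euc N, u x = 0) ∧ nehariFun N s Ω u = 0 ∧ c = energy N s Ω u}

/-!
The space `Ḣ^s(Ω)^σ_G` enters only as a semi-inner product space carrying the convex, positively
`p`-homogeneous potential `P u = ∫_Ω |u| ^ p`, with `p = 2*_s > 2`, and there every near-minimizer
of the energy on the Nehari manifold is almost critical.

The energy on the Nehari manifold is `κ ‖u‖²` with `κ = 1/2 - 1/p`, so the level is `κ R` with
`R = inf ‖u‖²`. If it is `0`, the zero sequence will do. If it is positive, rescaling an arbitrary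
`v` onto the Nehari manifold gives `P v ≤ R (‖v‖² / R) ^ (p / 2)`: the level is itself a Sobolev
constant, so no Sobolev inequality is needed. This is nearly an equality at a near-minimizer `u`,
`‖u‖² ≤ R + t²`. Bound `P (u ± t φ)` from below by convexity and from above by the second-order
expansion of the right-hand side: the linear terms can differ by at most `O(t²)`, and their
difference is a multiple of `t ⟨E'(u), φ⟩`, whence `⟨E'(u), φ⟩ = O(t)`.
-/

open Filter Topology RealInnerProductSpace

section PointwiseInequalities

lemma abs_rpow_sub_two_mul_mul_self {p : ℝ} (hp : p ≠ 0) (a : ℝ) :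
    |a| ^ (p - 2) * a * a = |a| ^ p := by
  rcases eq_or_ne a 0 with rfl | ha
  · simp [Real.zero_rpow hp]
  · rw [mul_assoc, ← abs_mul_abs_self a, ← mul_assoc, ← Real.rpow_add_one (abs_ne_zero.mpr ha),
      ← Real.rpow_add_one (abs_ne_zero.mpr ha)]
    ring_nf

lemma abs_rpow_sub_two_mul_self {p : ℝ} (hp : p ≠ 1) (a : ℝ) :
    |a| ^ (p - 2) * |a| = |a| ^ (p - 1) := by
  rcases eq_or_ne a 0 with rfl | ha
  · simp [Real.zero_rpow (sub_ne_zero.mpr hp)]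
  · rw [← Real.rpow_add_one (abs_ne_zero.mpr ha)]
    ring_nf

lemma mul_abs_rpow_sub_two_mul_mul_le {p : ℝ} (hp : 1 < p) (a b : ℝ) :
    p * |(|a| ^ (p - 2) * a * b)| ≤ (p - 1) * |a| ^ p + |b| ^ p := by
  have hp1 : p - 1 ≠ 0 := by linarith
  have young := Real.young_inequality_of_nonneg
    (Real.rpow_nonneg (abs_nonneg a) (p - 1)) (abs_nonneg b)
    (Real.HolderConjugate.conjExponent hp).symm
  rw [Real.conjExponent, ← Real.rpow_mul (abs_nonneg a), mul_div_cancel₀ _ hp1] at young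
  calc p * |(|a| ^ (p - 2) * a * b)| = p * (|a| ^ (p - 1) * |b|) := by
        rw [abs_mul, abs_mul, abs_of_nonneg (Real.rpow_nonneg (abs_nonneg a) _),
          abs_rpow_sub_two_mul_self hp.ne']
    _ ≤ p * (|a| ^ p / (p / (p - 1)) + |b| ^ p / p) := by gcongr
    _ = (p - 1) * |a| ^ p + |b| ^ p := by field_simp

lemma abs_rpow_add_mul_le_abs_add_rpow {p : ℝ} (hp : 1 < p) (a b : ℝ) :
    |a| ^ p + p * (|a| ^ (p - 2) * a * b) ≤ |a + b| ^ p := by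
  have young := mul_abs_rpow_sub_two_mul_mul_le hp a (a + b)
  have habs : p * (|a| ^ (p - 2) * a * (a + b)) ≤ p * |(|a| ^ (p - 2) * a * (a + b))| := by
    gcongr
    exact le_abs_self _
  have hself := abs_rpow_sub_two_mul_mul_self (by linarith : p ≠ 0) a
  rw [mul_add (|a| ^ (p - 2) * a), hself] at habs young
  linarith

lemma one_add_rpow_le_one_add_add_sq {q x : ℝ} (hq : 0 ≤ q) (hx : -1 ≤ x) (hqx : |q * x| ≤ 1) :
    (1 + x) ^ q ≤ 1 + q * x + (q * x) ^ 2 :=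
  calc (1 + x) ^ q ≤ Real.exp x ^ q :=
        Real.rpow_le_rpow (by linarith) (by linarith [Real.add_one_le_exp x]) hq
    _ = Real.exp (q * x) := by rw [← Real.exp_mul, mul_comm]
    _ ≤ 1 + q * x + (q * x) ^ 2 := by
        linarith [(abs_le.mp (Real.abs_exp_sub_one_sub_id_le hqx)).2]

end PointwiseInequalities

/-- A nonnegative, positively `p`-homogeneous convex potential on a semi-inner product space,
such as `u ↦ ∫ |u| ^ p`. Its derivative is recorded only through convexity, `p • grad u` being a
subgradient at `u`; no continuity, hence no Sobolev inequality, is built in. -/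
structure HomogeneousPotential (V : Type*) [SeminormedAddCommGroup V] [InnerProductSpace ℝ V]
    (p : ℝ) where
  toFun : V → ℝ
  grad : V → V →ₗ[ℝ] ℝ
  nonneg : ∀ u, 0 ≤ toFun u
  map_smul_of_pos : ∀ {t : ℝ}, 0 < t → ∀ u, toFun (t • u) = t ^ p * toFun u
  add_grad_le : ∀ u v, toFun u + p * grad u v ≤ toFun (u + v)
  grad_zero : grad 0 = 0
  eq_zero_of_norm_eq_zero : ∀ u, ‖u‖ = 0 → toFun u = 0

namespace HomogeneousPotential

variable {V : Type*} [SeminormedAddCommGroup V] [InnerProductSpace ℝ V] {p R : ℝ}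

instance : CoeFun (HomogeneousPotential V p) fun _ => V → ℝ := ⟨toFun⟩

/-- The energy functional `½‖u‖² - p⁻¹ P(u)` of the potential `P`. -/
def energy (P : HomogeneousPotential V p) (u : V) : ℝ := 1 / 2 * ‖u‖ ^ 2 - 1 / p * P u

/-- The derivative of the energy at `u`. -/
def energyDeriv (P : HomogeneousPotential V p) (u : V) : V →ₗ[ℝ] ℝ := innerₗ V u - P.grad u

/-- The Nehari manifold `‖u‖² = P(u)`. Trivial solutions are excluded by `P(u) ≠ 0` rather than by
`u ≠ 0`, as `V` may contain nonzero vectors of norm zero. -/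
def nehari (P : HomogeneousPotential V p) : Set V := {u | ‖u‖ ^ 2 = P u ∧ P u ≠ 0}

/-- The Nehari level, i.e. the infimum of the energy on the Nehari manifold. It is `0` when the
manifold is empty. -/
def level (P : HomogeneousPotential V p) : ℝ := sInf (P.energy '' P.nehari)

/-- `u` is a Palais–Smale sequence for the energy of `P` at level `c`: the energies tend to `c` and
the derivatives tend to zero in the dual norm, the latter being expressed as uniform convergence
on the unit ball. -/
def IsPalaisSmaleSeq (P : HomogeneousPotential V p) (c : ℝ) (u : ℕ → V) : Prop :=
  Tendsto (fun n => P.energy (u n)) atTop (𝓝 c) ∧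
    TendstoUniformlyOn (fun n φ => P.energyDeriv (u n) φ) 0 atTop {φ | ‖φ‖ ≤ 1}

variable (P : HomogeneousPotential V p) {u v w φ : V}

lemma energyDeriv_apply (u v : V) : P.energyDeriv u v = ⟪u, v⟫ - P.grad u v := rfl

lemma half_sub_one_div_pos (hp : 2 < p) : 0 < 1 / 2 - 1 / p :=
  sub_pos.mpr (one_div_lt_one_div_of_lt two_pos hp)

lemma energy_eq_of_mem_nehari (hu : u ∈ P.nehari) :
    P.energy u = (1 / 2 - 1 / p) * ‖u‖ ^ 2 := by
  rw [energy, ← hu.1]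
  ring

lemma energy_nonneg_of_mem_nehari (hp : 2 < p) (hu : u ∈ P.nehari) : 0 ≤ P.energy u := by
  rw [P.energy_eq_of_mem_nehari hu]
  exact mul_nonneg (half_sub_one_div_pos hp).le (sq_nonneg _)

lemma level_nonneg (hp : 2 < p) : 0 ≤ P.level :=
  Real.sInf_nonneg <| Set.forall_mem_image.mpr fun _ => P.energy_nonneg_of_mem_nehari hp

lemma level_le_energy (hp : 2 < p) (hu : u ∈ P.nehari) : P.level ≤ P.energy u :=
  csInf_le ⟨0, Set.forall_mem_image.mpr fun _ => P.energy_nonneg_of_mem_nehari hp⟩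
    (Set.mem_image_of_mem _ hu)

lemma nehari_nonempty_of_level_pos (h : 0 < P.level) : P.nehari.Nonempty := by
  by_contra hempty
  rw [Set.not_nonempty_iff_eq_empty] at hempty
  simp [level, hempty] at h

lemma exists_smul_mem_nehari (hp : p ≠ 2) (hv : P v ≠ 0) :
    ∃ t : ℝ, 0 < t ∧ t ^ (p - 2) = ‖v‖ ^ 2 / P v ∧ t • v ∈ P.nehari := by
  have hPv : 0 < P v := (P.nonneg v).lt_of_ne' hv
  have hnorm : ‖v‖ ≠ 0 := mt (P.eq_zero_of_norm_eq_zero v) hv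
  have hquot : 0 < ‖v‖ ^ 2 / P v := by positivity
  set t := (‖v‖ ^ 2 / P v) ^ (p - 2)⁻¹
  have ht : 0 < t := Real.rpow_pos_of_pos hquot _
  have htp : t ^ (p - 2) = ‖v‖ ^ 2 / P v :=
    Real.rpow_inv_rpow hquot.le (sub_ne_zero.mpr hp)
  have hsmul : P (t • v) = t ^ 2 * ‖v‖ ^ 2 := by
    calc P (t • v) = t ^ ((2 : ℕ) + (p - 2)) * P v := by
          rw [P.map_smul_of_pos ht]
          norm_num
      _ = t ^ 2 * ‖v‖ ^ 2 := by
          rw [Real.rpow_add ht, Real.rpow_natCast, htp, mul_assoc, div_mul_cancel₀ _ hv]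
  refine ⟨t, ht, htp, ?_, ?_⟩
  · rw [hsmul, norm_smul, mul_pow, Real.norm_eq_abs, sq_abs]
  · rw [hsmul]
    positivity

lemma apply_le_of_le_norm_sq_on_nehari (hp : 2 < p) (hR : 0 < R)
    (hmin : ∀ u ∈ P.nehari, R ≤ ‖u‖ ^ 2) (v : V) : P v ≤ R * (‖v‖ ^ 2 / R) ^ (p / 2) := by
  by_cases hv : P v = 0
  · rw [hv]
    positivity
  obtain ⟨t, ht, htp, hmem⟩ := P.exists_smul_mem_nehari hp.ne' hv
  have hnorm : ‖v‖ ≠ 0 := mt (P.eq_zero_of_norm_eq_zero v) hv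
  have hinv : t⁻¹ ^ 2 ≤ ‖v‖ ^ 2 / R := by
    have := hmin _ hmem
    rw [norm_smul, mul_pow, Real.norm_eq_abs, sq_abs] at this
    rw [inv_pow, inv_le_iff_one_le_mul₀ (by positivity), div_mul_eq_mul_div, one_le_div hR]
    linarith
  have hpow : P v / ‖v‖ ^ 2 = (t⁻¹ ^ 2) ^ ((p - 2) / 2) := by
    rw [← Real.rpow_natCast t⁻¹, ← Real.rpow_mul (by positivity), Nat.cast_ofNat,
      mul_div_cancel₀ _ two_ne_zero, Real.inv_rpow ht.le, htp, inv_div]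
  calc P v = R * (‖v‖ ^ 2 / R * (t⁻¹ ^ 2) ^ ((p - 2) / 2)) := by
        rw [← hpow]
        field_simp
    _ ≤ R * (‖v‖ ^ 2 / R * (‖v‖ ^ 2 / R) ^ ((p - 2) / 2)) := by
        gcongr
    _ = R * (‖v‖ ^ 2 / R) ^ (p / 2) := by
        rw [← Real.rpow_one_add' (by positivity) (by linarith)]
        ring_nf

lemma apply_le_taylor_of_le_norm_sq_on_nehari (hp : 2 < p) (hR : 0 < R)
    (hmin : ∀ u ∈ P.nehari, R ≤ ‖u‖ ^ 2) (hw : p / 2 * |‖w‖ ^ 2 - R| ≤ R) :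
    P w ≤ R + p / 2 * (‖w‖ ^ 2 - R) + (p / 2 * (‖w‖ ^ 2 - R)) ^ 2 / R := by
  set x := (‖w‖ ^ 2 - R) / R with hx
  have hone : ‖w‖ ^ 2 / R = 1 + x := by
    rw [hx]
    field_simp
    ring
  have hxge : -1 ≤ x := by
    have : 0 ≤ ‖w‖ ^ 2 / R := by positivity
    linarith
  have hsmall : |p / 2 * x| ≤ 1 := by
    rwa [hx, abs_mul, abs_div _ R, abs_of_pos hR, abs_of_pos (by linarith), mul_div_assoc',
      div_le_one hR]
  calc P w ≤ R * (1 + x) ^ (p / 2) := hone ▸ P.apply_le_of_le_norm_sq_on_nehari hp hR hmin w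
    _ ≤ R * (1 + p / 2 * x + (p / 2 * x) ^ 2) := by
        gcongr
        exact one_add_rpow_le_one_add_add_sq (by linarith) hxge hsmall
    _ = R + p / 2 * (‖w‖ ^ 2 - R) + (p / 2 * (‖w‖ ^ 2 - R)) ^ 2 / R := by
        rw [hx]
        field_simp

lemma abs_norm_add_smul_sq_sub_le {t : ℝ} (hu : R ≤ ‖u‖ ^ 2) (hut : ‖u‖ ^ 2 ≤ R + t ^ 2)
    (hφ : ‖φ‖ ≤ 1) (ht : |t| ≤ 1) : |‖u + t • φ‖ ^ 2 - R| ≤ (R + 4) * |t| := by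
  have htt : t ^ 2 ≤ |t| := by
    rw [← sq_abs]
    exact pow_le_of_le_one (abs_nonneg t) ht two_ne_zero
  have hnorm : ‖t • φ‖ ≤ |t| := by
    rw [norm_smul, Real.norm_eq_abs]
    exact mul_le_of_le_one_right (abs_nonneg t) hφ
  have hnormsq : ‖t • φ‖ ^ 2 ≤ |t| :=
    (pow_le_pow_left₀ (norm_nonneg _) hnorm 2).trans (by rwa [sq_abs])
  have hinner : 2 * |⟪u, t • φ⟫| ≤ (R + 2) * |t| :=
    calc 2 * |⟪u, t • φ⟫| ≤ 2 * (‖u‖ * |t|) := by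
          gcongr
          exact (abs_real_inner_le_norm _ _).trans (by gcongr)
      _ ≤ (R + 2) * |t| := by
          nlinarith [sq_nonneg (‖u‖ - 1), abs_nonneg t]
  rw [norm_add_sq_real, abs_le]
  have := abs_le.mp (le_refl |⟪u, t • φ⟫|)
  constructor <;> nlinarith [sq_nonneg ‖t • φ‖]

/-- Both sides of the convexity inequality `P u + p t ⟨grad u, φ⟩ ≤ P (u + t φ)` are within
`O(t²)` of `R` plus their terms linear in `φ`, which therefore nearly agree. -/
lemma neg_mul_energyDeriv_le {t : ℝ} (hp : 2 < p) (hR : 0 < R)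
    (hmin : ∀ u ∈ P.nehari, R ≤ ‖u‖ ^ 2) (hu : u ∈ P.nehari) (hut : ‖u‖ ^ 2 ≤ R + t ^ 2)
    (hφ : ‖φ‖ ≤ 1) (ht : |t| ≤ 1) (htR : p / 2 * ((R + 4) * |t|) ≤ R) :
    -(t * P.energyDeriv u φ) ≤ (1 + p * (R + 4) ^ 2 / (4 * R)) * t ^ 2 := by
  have hp0 : 0 < p := by linarith
  have hδ := abs_norm_add_smul_sq_sub_le (hmin u hu) hut hφ ht
  have htaylor := P.apply_le_taylor_of_le_norm_sq_on_nehari hp hR hmin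
    (w := u + t • φ) ((mul_le_mul_of_nonneg_left hδ (by linarith)).trans htR)
  have hremainder : (p / 2 * (‖u + t • φ‖ ^ 2 - R)) ^ 2 / R
      ≤ p * (p * (R + 4) ^ 2 / (4 * R)) * t ^ 2 :=
    calc (p / 2 * (‖u + t • φ‖ ^ 2 - R)) ^ 2 / R
        = (p / 2) ^ 2 * |‖u + t • φ‖ ^ 2 - R| ^ 2 / R := by rw [mul_pow, sq_abs]
      _ ≤ (p / 2) ^ 2 * ((R + 4) * |t|) ^ 2 / R := by gcongr
      _ = p * (p * (R + 4) ^ 2 / (4 * R)) * t ^ 2 := by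
          rw [mul_pow _ |t|, sq_abs]
          field_simp
          ring
  have hconvex := P.add_grad_le u (t • φ)
  rw [map_smul, smul_eq_mul, ← hu.1] at hconvex
  have hexpand : ‖u + t • φ‖ ^ 2 = ‖u‖ ^ 2 + 2 * (t * ⟪u, φ⟫) + t ^ 2 * ‖φ‖ ^ 2 := by
    rw [norm_add_sq_real, real_inner_smul_right, norm_smul, mul_pow, Real.norm_eq_abs, sq_abs]
  have hφsq : t ^ 2 * ‖φ‖ ^ 2 ≤ t ^ 2 :=
    mul_le_of_le_one_right (sq_nonneg t) (pow_le_one₀ (norm_nonneg φ) hφ)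
  have hgap : (p / 2 - 1) * (‖u‖ ^ 2 - R) ≤ (p / 2 - 1) * t ^ 2 :=
    mul_le_mul_of_nonneg_left (by linarith) (by linarith)
  refine le_of_mul_le_mul_left ?_ hp0
  have hsandwich := (hconvex.trans htaylor).trans (add_le_add_right hremainder _)
  rw [hexpand] at hsandwich
  rw [energyDeriv_apply]
  linarith [mul_le_mul_of_nonneg_left hφsq (by linarith : 0 ≤ p / 2), sq_nonneg t]

lemma abs_energyDeriv_le {t : ℝ} (hp : 2 < p) (hR : 0 < R)
    (hmin : ∀ u ∈ P.nehari, R ≤ ‖u‖ ^ 2) (hu : u ∈ P.nehari) (hut : ‖u‖ ^ 2 ≤ R + t ^ 2)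
    (hφ : ‖φ‖ ≤ 1) (ht0 : 0 < t) (ht1 : t ≤ 1) (htR : p / 2 * ((R + 4) * t) ≤ R) :
    |P.energyDeriv u φ| ≤ (1 + p * (R + 4) ^ 2 / (4 * R)) * t := by
  have habs := abs_of_pos ht0
  have hpos := P.neg_mul_energyDeriv_le hp hR hmin hu hut hφ (habs.trans_le ht1)
    (by rwa [habs])
  have hneg := P.neg_mul_energyDeriv_le hp hR hmin hu hut (φ := -φ) (by rwa [norm_neg])
    (habs.trans_le ht1) (by rwa [habs])
  rw [map_neg] at hneg
  rw [abs_le]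
  constructor <;> exact le_of_mul_le_mul_left (by linarith) ht0

lemma isPalaisSmaleSeq_zero : P.IsPalaisSmaleSeq 0 fun _ => 0 := by
  refine ⟨?_, ?_⟩
  · simp [energy, P.eq_zero_of_norm_eq_zero 0 norm_zero]
  · refine Metric.tendstoUniformlyOn_iff.mpr fun ε hε => .of_forall fun _ φ _ => ?_
    simpa [energyDeriv, P.grad_zero] using hε

lemma exists_energy_lt_and_abs_energyDeriv_lt (hp : 2 < p) (hlevel : 0 < P.level) {ε : ℝ}
    (hε : 0 < ε) :
    ∃ u ∈ P.nehari, P.energy u < P.level + ε ∧ ∀ φ, ‖φ‖ ≤ 1 → |P.energyDeriv u φ| < ε := by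
  set κ := 1 / 2 - 1 / p
  have hκ : 0 < κ := half_sub_one_div_pos hp
  set R := P.level / κ with hRdef
  have hR : 0 < R := div_pos hlevel hκ
  have hκR : P.level = κ * R := (mul_div_cancel₀ _ hκ.ne').symm
  have hmin : ∀ u ∈ P.nehari, R ≤ ‖u‖ ^ 2 := fun u hu => by
    rw [hRdef, div_le_iff₀' hκ, ← P.energy_eq_of_mem_nehari hu]
    exact P.level_le_energy hp hu
  have hsmall (c : ℝ) {b : ℝ} (hb : 0 < b) : ∀ᶠ t in 𝓝[>] (0 : ℝ), c * t < b :=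
    (Continuous.tendsto' (by fun_prop) 0 0 (mul_zero c)).mono_left nhdsWithin_le_nhds
      |>.eventually_lt_const hb
  obtain ⟨t, ⟨ht0, ht1⟩, htκ, htR, htε⟩ := ((eventually_mem_set.mpr (Ioo_mem_nhdsGT one_pos)).and
    ((hsmall κ hε).and ((hsmall (p / 2 * (R + 4)) hR).and
      (hsmall (1 + p * (R + 4) ^ 2 / (4 * R)) hε)))).exists
  obtain ⟨_, ⟨u, hu, rfl⟩, hlt⟩ := Real.lt_sInf_add_pos
    ((P.nehari_nonempty_of_level_pos hlevel).image _) (mul_pos hκ (pow_pos ht0 2))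
  change P.energy u < P.level + κ * t ^ 2 at hlt
  have htt : κ * t ^ 2 ≤ κ * t := by
    gcongr
    exact pow_le_of_le_one ht0.le ht1.le two_ne_zero
  have hut : ‖u‖ ^ 2 ≤ R + t ^ 2 := by
    rw [P.energy_eq_of_mem_nehari hu, hκR, ← mul_add] at hlt
    exact (lt_of_mul_lt_mul_left hlt hκ.le).le
  refine ⟨u, hu, by linarith, fun φ hφ => lt_of_le_of_lt ?_ htε⟩
  exact P.abs_energyDeriv_le hp hR hmin hu hut hφ ht0 ht1.le (by linarith)

theorem exists_isPalaisSmaleSeq_level (hp : 2 < p) : ∃ u, P.IsPalaisSmaleSeq P.level u := by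
  rcases (P.level_nonneg hp).eq_or_lt with hzero | hpos
  · exact ⟨fun _ => 0, hzero ▸ P.isPalaisSmaleSeq_zero⟩
  choose u hu henergy hderiv using fun n : ℕ =>
    P.exists_energy_lt_and_abs_energyDeriv_lt hp hpos (Nat.one_div_pos_of_nat (α := ℝ) (n := n))
  have hlim := tendsto_one_div_add_atTop_nhds_zero_nat (𝕜 := ℝ)
  refine ⟨u, ?_, Metric.tendstoUniformlyOn_iff.mpr fun ε hε => ?_⟩
  · refine tendsto_of_tendsto_of_tendsto_of_le_of_le tendsto_const_nhds ?_
      (fun n => P.level_le_energy hp (hu n)) fun n => (henergy n).le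
    simpa using hlim.const_add P.level
  · filter_upwards [hlim.eventually_lt_const hε] with n hn φ hφ
    simpa [dist_eq_norm] using (hderiv n φ hφ).trans hn

end HomogeneousPotential

section PowerIntegrals

variable {α : Type*} [MeasurableSpace α] {μ : Measure α} {p : ℝ} {u v : α → ℝ}

lemma memLp_ofReal_iff_integrable_abs_rpow (hp : 0 < p) (hu : AEStronglyMeasurable u μ) :
    MemLp u (ENNReal.ofReal p) μ ↔ Integrable (fun x => |u x| ^ p) μ := by
  rw [← integrable_norm_rpow_iff hu (ENNReal.ofReal_pos.mpr hp).ne' ENNReal.ofReal_ne_top,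
    ENNReal.toReal_ofReal hp.le]
  rfl

lemma integrable_abs_rpow_of_memLp (hp : 0 < p) (hu : MemLp u (ENNReal.ofReal p) μ) :
    Integrable (fun x => |u x| ^ p) μ :=
  (memLp_ofReal_iff_integrable_abs_rpow hp hu.1).mp hu

lemma integrable_abs_rpow_sub_two_mul_mul (hp : 1 < p) (hu : MemLp u (ENNReal.ofReal p) μ)
    (hv : MemLp v (ENNReal.ofReal p) μ) :
    Integrable (fun x => |u x| ^ (p - 2) * u x * v x) μ := by
  have hp0 : 0 < p := by linarith
  have hdom := ((integrable_abs_rpow_of_memLp hp0 hu).const_mul (p - 1)).add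
    (integrable_abs_rpow_of_memLp hp0 hv)
  have hmeas : AEMeasurable (fun x => |u x| ^ (p - 2) * u x * v x) μ :=
    ((hu.1.norm.aemeasurable.pow_const _).mul hu.1.aemeasurable).mul hv.1.aemeasurable
  refine (hdom.const_mul p⁻¹).mono' hmeas.aestronglyMeasurable (.of_forall fun x => ?_)
  rw [le_inv_mul_iff₀ hp0]
  exact mul_abs_rpow_sub_two_mul_mul_le hp (u x) (v x)

lemma integral_abs_rpow_add_mul_le (hp : 1 < p) (hu : MemLp u (ENNReal.ofReal p) μ)
    (hv : MemLp v (ENNReal.ofReal p) μ) :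
    ∫ x, |u x| ^ p ∂μ + p * ∫ x, |u x| ^ (p - 2) * u x * v x ∂μ ≤ ∫ x, |u x + v x| ^ p ∂μ := by
  have hp0 : 0 < p := by linarith
  have hu' := integrable_abs_rpow_of_memLp hp0 hu
  have huv := (integrable_abs_rpow_sub_two_mul_mul hp hu hv).const_mul p
  rw [← integral_const_mul, ← integral_add hu' huv]
  exact integral_mono (hu'.add huv) (integrable_abs_rpow_of_memLp hp0 (hu.add hv))
    fun x => abs_rpow_add_mul_le_abs_add_rpow hp (u x) (v x)

lemma integral_abs_rpow_eq_zero_iff (hp : 0 < p) (hu : MemLp u (ENNReal.ofReal p) μ) :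
    ∫ x, |u x| ^ p ∂μ = 0 ↔ ∀ᵐ x ∂μ, u x = 0 := by
  rw [integral_eq_zero_iff_of_nonneg (fun x => by positivity)
    (integrable_abs_rpow_of_memLp hp hu)]
  refine Filter.eventually_congr (.of_forall fun x => ?_)
  simp [Real.rpow_eq_zero_iff_of_nonneg (abs_nonneg (u x)), hp.ne']

lemma ae_eq_zero_of_memLp_of_ae_prod_eq {q : ENNReal} [SFinite μ] (hμ : μ Set.univ = ⊤)
    (hq0 : q ≠ 0) (hq : q ≠ ⊤) (hu : MemLp u q μ) (hconst : ∀ᵐ z ∂μ.prod μ, u z.1 = u z.2) :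
    ∀ᵐ x ∂μ, u x = 0 := by
  have : NeZero μ := ⟨fun h => by simp [h] at hμ⟩
  obtain ⟨x, hx⟩ := (Measure.ae_ae_of_ae_prod hconst).exists
  have hmem : MemLp (fun _ => u x) q μ := hu.ae_eq (hx.mono fun _ h => h.symm)
  have hux : u x = 0 := ((memLp_const_iff hq0 hq).mp hmem).resolve_right (by simp [hμ])
  filter_upwards [hx] with y hy
  rw [← hy, hux]

lemma tendsto_sSup_abs_of_tendstoUniformlyOn {ι β : Type*} {l : Filter ι} {F : ι → β → ℝ}
    {S : Set β} (hF : TendstoUniformlyOn F 0 l S) :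
    Tendsto (fun i => sSup ((fun x => |F i x|) '' S)) l (𝓝 0) := by
  rw [Metric.tendsto_nhds]
  intro ε hε
  filter_upwards [Metric.tendstoUniformlyOn_iff.mp hF (ε / 2) (half_pos hε)] with i hi
  have hnonneg : 0 ≤ sSup ((fun x => |F i x|) '' S) :=
    Real.sSup_nonneg <| Set.forall_mem_image.mpr fun _ _ => abs_nonneg _
  have hle : sSup ((fun x => |F i x|) '' S) ≤ ε / 2 :=
    Real.sSup_le (Set.forall_mem_image.mpr fun x hx => by
      simpa [dist_eq_norm] using (hi x hx).le) (half_pos hε).le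
  rw [Real.dist_0_eq_abs, abs_of_nonneg hnonneg]
  linarith

end PowerIntegrals

section GagliardoQuotient

variable {N : ℕ} {s : ℝ} {u v : Euc N → ℝ}

/-- The difference quotient `(u(x) - u(y)) / |x - y| ^ (N/2 + s)`, whose `L²` norm is the Gagliardo
seminorm; it linearizes the seminorm. -/
def gagliardoQuotient (N : ℕ) (s : ℝ) (u : Euc N → ℝ) (z : Euc N × Euc N) : ℝ :=
  (u z.1 - u z.2) / dist z.1 z.2 ^ (((N : ℝ) + 2 * s) / 2)

lemma gagliardoQuotient_zero : gagliardoQuotient N s 0 = 0 := by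
  ext z
  simp [gagliardoQuotient]

lemma gagliardoQuotient_add (u v : Euc N → ℝ) :
    gagliardoQuotient N s (u + v) = gagliardoQuotient N s u + gagliardoQuotient N s v := by
  ext z
  simp only [gagliardoQuotient, Pi.add_apply]
  ring

lemma gagliardoQuotient_smul (t : ℝ) (u : Euc N → ℝ) :
    gagliardoQuotient N s (t • u) = t • gagliardoQuotient N s u := by
  ext z
  simp only [gagliardoQuotient, Pi.smul_apply, smul_eq_mul]
  ring

lemma gagliardoQuotient_mul (u v : Euc N → ℝ) (z : Euc N × Euc N) :
    gagliardoQuotient N s u z * gagliardoQuotient N s v z =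
      (u z.1 - u z.2) * (v z.1 - v z.2) / dist z.1 z.2 ^ ((N : ℝ) + 2 * s) := by
  have hsq : dist z.1 z.2 ^ ((N : ℝ) + 2 * s)
      = dist z.1 z.2 ^ (((N : ℝ) + 2 * s) / 2) * dist z.1 z.2 ^ (((N : ℝ) + 2 * s) / 2) := by
    rw [← sq, ← Real.rpow_mul_natCast dist_nonneg, Nat.cast_ofNat, div_mul_cancel₀ _ two_ne_zero]
  rw [gagliardoQuotient, gagliardoQuotient, div_mul_div_comm, hsq]

lemma gagliardoQuotient_sq (u : Euc N → ℝ) (z : Euc N × Euc N) :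
    gagliardoQuotient N s u z ^ 2 = (u z.1 - u z.2) ^ 2 / dist z.1 z.2 ^ ((N : ℝ) + 2 * s) := by
  rw [sq, gagliardoQuotient_mul, ← sq]

lemma eq_of_gagliardoQuotient_eq_zero {z : Euc N × Euc N} (h : gagliardoQuotient N s u z = 0) :
    u z.1 = u z.2 := by
  by_cases hz : z.1 = z.2
  · rw [hz]
  · have hdist : dist z.1 z.2 ^ (((N : ℝ) + 2 * s) / 2) ≠ 0 :=
      (Real.rpow_pos_of_pos (dist_pos.mpr hz) _).ne'
    exact sub_eq_zero.mp ((div_eq_zero_iff.mp h).resolve_right hdist)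

lemma measurable_gagliardoQuotient (hu : Measurable u) : Measurable (gagliardoQuotient N s u) := by
  have hdist : Measurable fun z : Euc N × Euc N => dist z.1 z.2 := by fun_prop
  exact ((hu.comp measurable_fst).sub (hu.comp measurable_snd)).div (hdist.pow_const _)

lemma gagFinite_iff_memLp_gagliardoQuotient (hu : Measurable u) :
    GagFinite N s u ↔ MemLp (gagliardoQuotient N s u) 2 := by
  rw [memLp_two_iff_integrable_sq (measurable_gagliardoQuotient hu).aestronglyMeasurable]
  simp only [gagliardoQuotient_sq, GagFinite]

lemma gagSq_eq_integral_sq (u : Euc N → ℝ) : gagSq N s u = ∫ z, gagliardoQuotient N s u z ^ 2 := by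
  simp only [gagliardoQuotient_sq, gagSq]

lemma pairing_eq_integral_mul_sub (Ω : Set (Euc N)) (u v : Euc N → ℝ) :
    pairing N s Ω u v = (∫ z, gagliardoQuotient N s u z * gagliardoQuotient N s v z) -
      ∫ x in Ω, |u x| ^ (twoStar N s - 2) * u x * v x := by
  simp only [gagliardoQuotient_mul, pairing]

end GagliardoQuotient

section EquivariantSobolevSpace

variable {N : ℕ} {s : ℝ} {Ω : Set (Euc N)} {G : Subgroup (ONgrp N)} {σ : G →* ℤˣ}

/-- The linear space `Ḣ^s(Ω)^σ_G`. Membership is phrased through `MemLp`, which makes it a submodule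
for every `s`; see `mem_equivariantSobolev_iff` for the original conditions. -/
def equivariantSobolev (N : ℕ) (s : ℝ) (Ω : Set (Euc N)) (G : Subgroup (ONgrp N)) (σ : G →* ℤˣ) :
    Submodule ℝ (Euc N → ℝ) where
  carrier := {u | Measurable u ∧ MemLp u (ENNReal.ofReal (twoStar N s)) ∧
    MemLp (gagliardoQuotient N s u) 2 ∧ (∀ᵐ x, x ∉ Ω → u x = 0) ∧ IsEquivariant G σ u}
  zero_mem' := by
    refine ⟨measurable_const, MemLp.zero, ?_, by simp, fun g x => by simp⟩
    rw [gagliardoQuotient_zero]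
    exact MemLp.zero
  add_mem' := by
    rintro u v ⟨hu, hup, huq, hu0, huG⟩ ⟨hv, hvp, hvq, hv0, hvG⟩
    refine ⟨hu.add hv, hup.add hvp, gagliardoQuotient_add u v ▸ huq.add hvq, ?_, fun g x => ?_⟩
    · filter_upwards [hu0, hv0] with x hux hvx hx
      rw [Pi.add_apply, hux hx, hvx hx, add_zero]
    · rw [Pi.add_apply, Pi.add_apply, huG, hvG, mul_add]
  smul_mem' := by
    rintro t u ⟨hu, hup, huq, hu0, huG⟩
    refine ⟨hu.const_smul t, hup.const_smul t, gagliardoQuotient_smul t u ▸ huq.const_smul t, ?_,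
      fun g x => ?_⟩
    · filter_upwards [hu0] with x hux hx
      rw [Pi.smul_apply, hux hx, smul_zero]
    · rw [Pi.smul_apply, Pi.smul_apply, huG, smul_eq_mul, smul_eq_mul, mul_left_comm]

lemma mem_equivariantSobolev_iff (hp : 0 < twoStar N s) {u : Euc N → ℝ} :
    u ∈ equivariantSobolev N s Ω G σ ↔ MemHs N s Ω u ∧ IsEquivariant G σ u := by
  constructor
  · rintro ⟨hu, hup, huq, hu0, huG⟩
    exact ⟨⟨hu, integrable_abs_rpow_of_memLp hp hup,
      (gagFinite_iff_memLp_gagliardoQuotient hu).mpr huq, hu0⟩, huG⟩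
  · rintro ⟨⟨hu, hup, huq, hu0⟩, huG⟩
    exact ⟨hu, (memLp_ofReal_iff_integrable_abs_rpow hp hu.aestronglyMeasurable).mpr hup,
      (gagFinite_iff_memLp_gagliardoQuotient hu).mp huq, hu0, huG⟩

/-- `Ḣ^s(Ω)^σ_G` as a type of its own, carrying the Gagliardo semi-inner product. A copy of the
submodule is used because the latter already has the topology of pointwise convergence. -/
def EquivariantSobolev (N : ℕ) (s : ℝ) (Ω : Set (Euc N)) (G : Subgroup (ONgrp N)) (σ : G →* ℤˣ) :
    Type :=
  equivariantSobolev N s Ω G σ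

namespace EquivariantSobolev

instance : AddCommGroup (EquivariantSobolev N s Ω G σ) :=
  inferInstanceAs (AddCommGroup (equivariantSobolev N s Ω G σ))

instance : Module ℝ (EquivariantSobolev N s Ω G σ) :=
  inferInstanceAs (Module ℝ (equivariantSobolev N s Ω G σ))

instance : CoeFun (EquivariantSobolev N s Ω G σ) fun _ => Euc N → ℝ := ⟨Subtype.val⟩

variable (u v : EquivariantSobolev N s Ω G σ)

lemma measurable : Measurable u := u.2.1

lemma memLp : MemLp u (ENNReal.ofReal (twoStar N s)) := u.2.2.1

lemma memLp_gagliardoQuotient : MemLp (gagliardoQuotient N s u) 2 := u.2.2.2.1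

lemma integrable_gagliardoQuotient_mul :
    Integrable fun z => gagliardoQuotient N s u z * gagliardoQuotient N s v z :=
  u.memLp_gagliardoQuotient.integrable_mul v.memLp_gagliardoQuotient

lemma ae_eq_zero_of_notMem : ∀ᵐ x, x ∉ Ω → u x = 0 := u.2.2.2.2.1

instance innerProductSpaceCore : PreInnerProductSpace.Core ℝ (EquivariantSobolev N s Ω G σ) where
  inner u v := ∫ z, gagliardoQuotient N s u z * gagliardoQuotient N s v z
  conj_inner_symm u v := by simp only [mul_comm, conj_trivial]
  re_inner_nonneg u := integral_nonneg fun z => mul_self_nonneg _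
  add_left u v w := by
    rw [← integral_add (u.integrable_gagliardoQuotient_mul w)
      (v.integrable_gagliardoQuotient_mul w)]
    refine integral_congr_ae (.of_forall fun z => ?_)
    exact (congrArg (· * _) (congrFun (gagliardoQuotient_add (u : Euc N → ℝ) v) z)).trans
      (add_mul _ _ _)
  smul_left u v t := by
    rw [conj_trivial, ← integral_const_mul]
    refine integral_congr_ae (.of_forall fun z => ?_)
    exact (congrArg (· * _) (congrFun (gagliardoQuotient_smul t (u : Euc N → ℝ)) z)).trans
      (mul_assoc _ _ _)

instance : SeminormedAddCommGroup (EquivariantSobolev N s Ω G σ) :=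
  InnerProductSpace.Core.toSeminormedAddCommGroup (𝕜 := ℝ)

instance : InnerProductSpace ℝ (EquivariantSobolev N s Ω G σ) :=
  InnerProductSpace.ofCore innerProductSpaceCore

lemma inner_eq : ⟪u, v⟫ = ∫ z, gagliardoQuotient N s u z * gagliardoQuotient N s v z := rfl

lemma norm_sq_eq_gagSq : ‖u‖ ^ 2 = gagSq N s u := by
  rw [← real_inner_self_eq_norm_sq, inner_eq, gagSq_eq_integral_sq]
  simp only [sq]

lemma norm_eq_gagNorm : ‖u‖ = gagNorm N s u := by
  rw [gagNorm, ← norm_sq_eq_gagSq, Real.sqrt_sq (norm_nonneg u)]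

lemma ae_restrict_eq_zero_iff : (∀ᵐ x ∂volume.restrict Ω, u x = 0) ↔ ∀ᵐ x, u x = 0 := by
  rw [ae_restrict_iff (measurableSet_eq_fun u.measurable measurable_const)]
  refine ⟨fun h => ?_, fun h => h.mono fun _ hx _ => hx⟩
  filter_upwards [h, u.ae_eq_zero_of_notMem] with x hin hout
  exact (em (x ∈ Ω)).elim hin hout

lemma ae_eq_zero_of_norm_eq_zero (hp : 0 < twoStar N s) (hu : ‖u‖ = 0) : ∀ᵐ x, u x = 0 := by
  have hN : N ≠ 0 := by
    rintro rfl
    simp [twoStar] at hp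
  have : NeZero N := ⟨hN⟩
  have hquot : gagliardoQuotient N s u =ᵐ[volume] 0 := by
    have hint : ∫ z, gagliardoQuotient N s u z ^ 2 = 0 := by
      rw [← gagSq_eq_integral_sq, ← norm_sq_eq_gagSq, hu, sq, mul_zero]
    filter_upwards [(integral_eq_zero_iff_of_nonneg (fun z => sq_nonneg _)
      u.memLp_gagliardoQuotient.integrable_sq).mp hint] with z hz
    exact pow_eq_zero_iff two_ne_zero |>.mp hz
  exact ae_eq_zero_of_memLp_of_ae_prod_eq (measure_univ_of_isAddLeftInvariant _)
    (ENNReal.ofReal_pos.mpr hp).ne' ENNReal.ofReal_ne_top u.memLp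
    (hquot.mono fun _ => eq_of_gagliardoQuotient_eq_zero)

end EquivariantSobolev

open EquivariantSobolev

/-- The critical potential `u ↦ ∫_Ω |u| ^ 2*_s` on `Ḣ^s(Ω)^σ_G`. -/
def criticalPotential (Ω : Set (Euc N)) (G : Subgroup (ONgrp N)) (σ : G →* ℤˣ)
    (hp : 2 < twoStar N s) :
    HomogeneousPotential (EquivariantSobolev N s Ω G σ) (twoStar N s) where
  toFun u := ∫ x in Ω, |u x| ^ twoStar N s
  grad u :=
    { toFun := fun v => ∫ x in Ω, |u x| ^ (twoStar N s - 2) * u x * v x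
      map_add' := fun v w => by
        have hint (v : EquivariantSobolev N s Ω G σ) := integrable_abs_rpow_sub_two_mul_mul
          (by linarith) (u.memLp.restrict Ω) (v.memLp.restrict Ω)
        rw [← integral_add (hint v) (hint w)]
        exact integral_congr_ae (.of_forall fun x => mul_add _ _ _)
      map_smul' := fun t v => by
        rw [RingHom.id_apply, smul_eq_mul, ← integral_const_mul]
        exact integral_congr_ae (.of_forall fun x => mul_left_comm _ _ _) }
  nonneg u := integral_nonneg fun x => by positivity
  map_smul_of_pos {t} ht u := by
    rw [← integral_const_mul]
    refine integral_congr_ae (.of_forall fun x => ?_)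
    change |t * u x| ^ twoStar N s = t ^ twoStar N s * |u x| ^ twoStar N s
    rw [abs_mul, abs_of_pos ht, Real.mul_rpow ht.le (abs_nonneg _)]
  add_grad_le u v := integral_abs_rpow_add_mul_le (by linarith) (u.memLp.restrict Ω)
    (v.memLp.restrict Ω)
  grad_zero := by
    ext v
    change ∫ x in Ω, |(0 : ℝ)| ^ (twoStar N s - 2) * 0 * v x = 0
    simp
  eq_zero_of_norm_eq_zero u hu :=
    (integral_abs_rpow_eq_zero_iff (by linarith) (u.memLp.restrict Ω)).mpr <|
      u.ae_restrict_eq_zero_iff.mpr <| u.ae_eq_zero_of_norm_eq_zero (by linarith) hu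

variable (hp : 2 < twoStar N s) (u v : EquivariantSobolev N s Ω G σ)

lemma criticalPotential_apply :
    criticalPotential Ω G σ hp u = ∫ x in Ω, |u x| ^ twoStar N s := rfl

lemma criticalPotential_energy : (criticalPotential Ω G σ hp).energy u = energy N s Ω u := by
  rw [HomogeneousPotential.energy, norm_sq_eq_gagSq, criticalPotential_apply, energy]

lemma criticalPotential_energyDeriv :
    (criticalPotential Ω G σ hp).energyDeriv u v = pairing N s Ω u v :=
  (pairing_eq_integral_mul_sub Ω u v).symm

lemma mem_criticalPotential_nehari_iff :
    u ∈ (criticalPotential Ω G σ hp).nehari ↔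
      nehariFun N s Ω u = 0 ∧ ¬ ∀ᵐ x, u x = 0 := by
  rw [HomogeneousPotential.nehari, Set.mem_ofPred_eq, norm_sq_eq_gagSq, criticalPotential_apply,
    nehariFun, sub_eq_zero, Ne, integral_abs_rpow_eq_zero_iff (by linarith) (u.memLp.restrict Ω),
    ae_restrict_eq_zero_iff]

lemma criticalPotential_level : (criticalPotential Ω G σ hp).level = mval N s Ω G σ := by
  refine congrArg sInf (Set.ext fun c => ⟨?_, ?_⟩)
  · rintro ⟨u, hu, rfl⟩
    obtain ⟨hnehari, hne⟩ := (mem_criticalPotential_nehari_iff hp u).mp hu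
    obtain ⟨hmem, hequiv⟩ := (mem_equivariantSobolev_iff (by linarith)).mp u.2
    exact ⟨u, hmem, hequiv, hne, hnehari, criticalPotential_energy hp u⟩
  · rintro ⟨u, hmem, hequiv, hne, hnehari, rfl⟩
    refine ⟨⟨u, (mem_equivariantSobolev_iff (by linarith)).mpr ⟨hmem, hequiv⟩⟩, ?_,
      criticalPotential_energy hp _⟩
    exact (mem_criticalPotential_nehari_iff hp _).mpr ⟨hnehari, hne⟩

lemma abs_energyDeriv_image_unitBall :
    (fun φ => |(criticalPotential Ω G σ hp).energyDeriv u φ|) '' {φ | ‖φ‖ ≤ 1} =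
      {c : ℝ | ∃ φ : Euc N → ℝ, MemHs N s Ω φ ∧ IsEquivariant G σ φ ∧ gagNorm N s φ ≤ 1 ∧
        c = |pairing N s Ω u φ|} := by
  refine Set.ext fun c => ⟨?_, ?_⟩
  · rintro ⟨φ, hφ, rfl⟩
    obtain ⟨hmem, hequiv⟩ := (mem_equivariantSobolev_iff (by linarith)).mp φ.2
    exact ⟨φ, hmem, hequiv, φ.norm_eq_gagNorm ▸ hφ,
      congrArg abs (criticalPotential_energyDeriv hp u φ)⟩
  · rintro ⟨φ, hmem, hequiv, hφ, rfl⟩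
    refine ⟨⟨φ, (mem_equivariantSobolev_iff (by linarith)).mpr ⟨hmem, hequiv⟩⟩, ?_,
      congrArg abs (criticalPotential_energyDeriv hp u _)⟩
    exact (norm_eq_gagNorm _).trans_le hφ

end EquivariantSobolevSpace

lemma two_lt_twoStar {N : ℕ} {s : ℝ} (hs0 : 0 < s) (hsN : 2 * s < N) : 2 < twoStar N s := by
  rw [twoStar, lt_div_iff₀ (by linarith)]
  linarith

theorem statement13_general {N : ℕ} {s : ℝ} (hs0 : 0 < s) (_hs1 : s < 1) (hsN : 2 * s < N)
    (G : Subgroup (ONgrp N)) (σ : G →* ℤˣ) (_hσ : Continuous σ) (_hG2 : CondG2 G σ)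
    (Ω : Set (Euc N)) :
    ∃ u : ℕ → Euc N → ℝ,
      (∀ n : ℕ, MemHs N s Ω (u n) ∧ IsEquivariant G σ (u n)) ∧
      Tendsto (fun n => energy N s Ω (u n)) atTop (𝓝 (mval N s Ω G σ)) ∧
      Tendsto (fun n => sSup {c : ℝ | ∃ φ : Euc N → ℝ, MemHs N s Ω φ ∧
          IsEquivariant G σ φ ∧ gagNorm N s φ ≤ 1 ∧ c = |pairing N s Ω (u n) φ|})
        atTop (𝓝 0) := by
  have hp := two_lt_twoStar hs0 hsN
  obtain ⟨u, henergy, hderiv⟩ := (criticalPotential Ω G σ hp).exists_isPalaisSmaleSeq_level hp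
  refine ⟨fun n => u n, fun n => (mem_equivariantSobolev_iff (by linarith)).mp (u n).2, ?_, ?_⟩
  · simpa only [criticalPotential_energy, criticalPotential_level] using henergy
  · simpa only [abs_energyDeriv_image_unitBall] using
      tendsto_sSup_abs_of_tendstoUniformlyOn hderiv

/-- existence of a Palais–Smale sequence at level `m(Ω)^σ_G`. -/
theorem statement13 (N : ℕ) (s : ℝ) (hN : 2 ≤ N) (hs0 : 0 < s) (hs1 : s < 1)
    (hsN : 2 * s < N)
    (G : Subgroup (ONgrp N)) (hGc : IsClosed (G : Set (ONgrp N)))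
    (σ : G →* ℤˣ) (hσ : Continuous σ) (hσs : Function.Surjective σ) (hG2 : CondG2 G σ)
    (Ω : Set (Euc N)) (hΩ : IsOpen Ω) (hΩG : IsInvariantSet G Ω) :
    ∃ u : ℕ → Euc N → ℝ,
      (∀ n : ℕ, MemHs N s Ω (u n) ∧ IsEquivariant G σ (u n)) ∧
      Filter.Tendsto (fun n => energy N s Ω (u n)) Filter.atTop (nhds (mval N s Ω G σ)) ∧
      Filter.Tendsto (fun n => sSup {c : ℝ | ∃ φ : Euc N → ℝ, MemHs N s Ω φ ∧
          IsEquivariant G σ φ ∧ gagNorm N s φ ≤ 1 ∧ c = |pairing N s Ω (u n) φ|})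
        Filter.atTop (nhds 0) := by
  exact statement13_general hs0 hs1 hsN G σ hσ hG2 Ω

end
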